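/- Both U₋ and U₊ have infinitely many zeros on the open ray arg z = π/3, and the moduli of these zeros interlace: if (α_k)_{k≥1} and (β_k)_{k≥1} denote the increasing enumerations of the moduli of the zeros of U₋ and of U₊ on this ray, respectively, then β_k < α_k < β_{k+1} for every k ≥ 1. -/

import Mathlib

open Complex MeasureTheory Real

noncomputable section

/-- `w` is an entire solution of the Airy equation `w'' = z·w`
with prescribed (real) values of `w` and `w'` at the origin. -/
def IsAiry (w : ℂ → ℂ) (w0 w0' : ℝ) : Prop :=
  Differentiable ℂ w ∧ Differentiable ℂ (deriv w) ∧
  (∀ z : ℂ, deriv (deriv w) z = z * w z) ∧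
  w 0 = (w0 : ℂ) ∧ deriv w 0 = (w0' : ℂ)

/-- `Ai` is the standard Airy function of the first kind. -/
def IsAiryAi (Ai : ℂ → ℂ) : Prop :=
  IsAiry Ai ((3 : ℝ) ^ (-(2 : ℝ)/3) / Real.Gamma (2/3))
    (-((3 : ℝ) ^ (-(1 : ℝ)/3)) / Real.Gamma (1/3))

/-- `Bi` is the standard Airy function of the second kind. -/
def IsAiryBi (Bi : ℂ → ℂ) : Prop :=
  IsAiry Bi ((3 : ℝ) ^ (-(1 : ℝ)/6) / Real.Gamma (2/3))
    ((3 : ℝ) ^ ((1 : ℝ)/6) / Real.Gamma (1/3))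

/-- `U₋ = -√3·Ai + Bi`. -/
def Uminus (Ai Bi : ℂ → ℂ) : ℂ → ℂ := fun z => -(Real.sqrt 3 : ℂ) * Ai z + Bi z

/-- `U₊ = √3·Ai + Bi`. -/
def Uplus (Ai Bi : ℂ → ℂ) : ℂ → ℂ := fun z => (Real.sqrt 3 : ℂ) * Ai z + Bi z

/-- The moduli of the zeros of `U` on the open ray `arg z = π/3`. -/
def rayZeroModuli (U : ℂ → ℂ) : Set ℝ :=
  {r : ℝ | 0 < r ∧ U ((r : ℂ) * Complex.exp ((π/3 : ℝ) * Complex.I)) = 0}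

/-!
On the ray spanned by `ω = exp (iπ/3)` we have `ω ^ 3 = -1`, so `t ↦ w (t * ω)` solves
`y'' = -t * y` whenever `w` solves the Airy equation. Since `U₋ 0 = 0` and `U₊' 0 = 0`, suitable
multiples `u` of `t ↦ U₋ (t * ω)` and `v` of `t ↦ U₊ (t * ω)` have real initial data, hence are
real. Their Wronskian is a positive constant, so the argument of the plane curve `v + i u` increases
strictly, starting from `0`. It is unbounded because `u` and `v` stay bounded: for every real
solution `y`, the energy `y ^ 2 + y' ^ 2 / t` is nonincreasing on `t > 0`. The zeros of `v` and of
`u` are thus met alternately, as the argument passes the odd and the even multiples of `π / 2`.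
-/

open Filter

theorem exists_strictMono_range_eq_preimage {ι X Y : Type*} [Preorder ι] [LinearOrder X]
    [Preorder Y] {θ : X → Y} {a : ι → Y} (hθ : StrictMono θ) (ha : StrictMono a)
    (h : Set.range a ⊆ Set.range θ) :
    ∃ α : ι → X, StrictMono α ∧ Set.range α = θ ⁻¹' Set.range a ∧ ∀ k, θ (α k) = a k := by
  choose α hα using fun k => h (Set.mem_range_self k)
  refine ⟨α, fun i j hij => ?_, Set.ext fun x => exists_congr fun k => ?_, hα⟩
  · rw [← hθ.lt_iff_lt, hα, hα]
    exact ha hij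
  · rw [← hα k, hθ.injective.eq_iff]

theorem pos_and_sin_eq_zero_iff {x : ℝ} :
    0 < x ∧ Real.sin x = 0 ↔ x ∈ Set.range fun k : ℕ => (k + 1) * π := by
  constructor
  · rintro ⟨hx, hsin⟩
    obtain ⟨n, rfl⟩ := Real.sin_eq_zero_iff.mp hsin
    have hn : 0 < n := by exact_mod_cast pos_of_mul_pos_left hx Real.pi_pos.le
    obtain ⟨k, rfl⟩ : ∃ k : ℕ, n = k + 1 := ⟨(n - 1).toNat, by omega⟩
    exact ⟨k, by push_cast; rfl⟩
  · rintro ⟨k, rfl⟩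
    exact ⟨by positivity, mod_cast Real.sin_nat_mul_pi (k + 1)⟩

theorem pos_and_cos_eq_zero_iff {x : ℝ} :
    0 < x ∧ Real.cos x = 0 ↔ x ∈ Set.range fun k : ℕ => (2 * k + 1) * π / 2 := by
  constructor
  · rintro ⟨hx, hcos⟩
    obtain ⟨n, rfl⟩ := Real.cos_eq_zero_iff.mp hcos
    have hn : 0 < 2 * n + 1 := by
      rw [mul_div_assoc] at hx
      exact_mod_cast pos_of_mul_pos_left hx Real.pi_div_two_pos.le
    obtain ⟨k, rfl⟩ : ∃ k : ℕ, n = k := ⟨n.toNat, by omega⟩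
    exact ⟨k, by push_cast; rfl⟩
  · rintro ⟨k, rfl⟩
    exact ⟨by positivity, Real.cos_eq_zero_iff.mpr ⟨k, by push_cast; rfl⟩⟩

theorem exists_interlacing_zeros_sin_cos {θ : ℝ → ℝ} {t₀ : ℝ} (hθ : StrictMono θ)
    (hcont : Continuous θ) (h0 : θ t₀ = 0) (htop : Tendsto θ atTop atTop) :
    ∃ α β : ℕ → ℝ, StrictMono α ∧ StrictMono β ∧
      Set.range α = {r | t₀ < r ∧ Real.sin (θ r) = 0} ∧
      Set.range β = {r | t₀ < r ∧ Real.cos (θ r) = 0} ∧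
      ∀ k : ℕ, β k < α k ∧ α k < β (k + 1) := by
  have hrange : Set.Ioi 0 ⊆ Set.range θ := by
    rw [← h0]
    exact (intermediate_value_Ioi hcont.continuousOn htop).trans (Set.image_subset_range _ _)
  have hpos (r : ℝ) : t₀ < r ↔ 0 < θ r := by rw [← h0, hθ.lt_iff_lt]
  obtain ⟨α, hα, hα_range, hθα⟩ :=
    exists_strictMono_range_eq_preimage (a := fun k : ℕ => (k + 1) * π) hθ
      (fun i j hij => by dsimp only; gcongr)
      fun _ hx => hrange (pos_and_sin_eq_zero_iff.mpr hx).1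
  obtain ⟨β, hβ, hβ_range, hθβ⟩ :=
    exists_strictMono_range_eq_preimage (a := fun k : ℕ => (2 * k + 1) * π / 2) hθ
      (fun i j hij => by dsimp only; gcongr)
      fun _ hx => hrange (pos_and_cos_eq_zero_iff.mpr hx).1
  refine ⟨α, β, hα, hβ, ?_, ?_, fun k => ⟨?_, ?_⟩⟩
  · simp only [hα_range, hpos, pos_and_sin_eq_zero_iff, Set.preimage]
  · simp only [hβ_range, hpos, pos_and_cos_eq_zero_iff, Set.preimage]
  all_goals
    rw [← hθ.lt_iff_lt, hθα, hθβ]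
    push_cast
    linarith [Real.pi_pos]

theorem exists_exp_lift {z z' : ℝ → ℂ} (t₀ : ℝ) (hz : ∀ t, HasDerivAt z (z' t) t)
    (hz' : Continuous z') (hne : ∀ t, z t ≠ 0) :
    ∃ L : ℝ → ℂ, L t₀ = 0 ∧ (∀ t, HasDerivAt L (z' t / z t) t) ∧
      ∀ t, z t = z t₀ * Complex.exp (L t) := by
  have hcont : Continuous fun t => z' t / z t :=
    hz'.div (continuous_iff_continuousAt.mpr fun t => (hz t).continuousAt) hne
  set L : ℝ → ℂ := fun t => ∫ s in t₀..t, z' s / z s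
  have hL0 : L t₀ = 0 := intervalIntegral.integral_same
  have hL (t : ℝ) : HasDerivAt L (z' t / z t) t := (hcont.integral_hasStrictDerivAt t₀ t).hasDerivAt
  have hconst (t : ℝ) : HasDerivAt (fun t => z t * Complex.exp (-L t)) 0 t := by
    refine ((hz t).mul (hL t).neg.cexp).congr_deriv ?_
    field_simp [hne t]
    ring
  refine ⟨L, hL0, hL, fun t => ?_⟩
  have h : z t * Complex.exp (-L t) = z t₀ * Complex.exp (-L t₀) :=
    is_const_of_deriv_eq_zero (fun s => (hconst s).differentiableAt) (fun s => (hconst s).deriv)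
      t t₀
  rw [hL0, neg_zero, Complex.exp_zero, mul_one] at h
  rw [← h, mul_assoc, ← Complex.exp_add, neg_add_cancel, Complex.exp_zero, mul_one]

theorem exists_pruferAngle {u u' v v' : ℝ → ℝ} {t₀ : ℝ} (hu : ∀ t, HasDerivAt u (u' t) t)
    (hv : ∀ t, HasDerivAt v (v' t) t) (hu' : Continuous u') (hv' : Continuous v')
    (hne : ∀ t, u t ^ 2 + v t ^ 2 ≠ 0) (hu0 : u t₀ = 0) :
    ∃ θ : ℝ → ℝ, θ t₀ = 0 ∧
      (∀ t, HasDerivAt θ ((v t * u' t - u t * v' t) / (u t ^ 2 + v t ^ 2)) t) ∧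
      (∀ t, u t = 0 ↔ Real.sin (θ t) = 0) ∧ ∀ t, v t = 0 ↔ Real.cos (θ t) = 0 := by
  set z : ℝ → ℂ := fun t => v t + u t * Complex.I
  have hz (t : ℝ) : HasDerivAt z (v' t + u' t * Complex.I) t :=
    (hv t).ofReal_comp.add ((hu t).ofReal_comp.mul_const Complex.I)
  have hz_normSq (t : ℝ) : Complex.normSq (z t) = u t ^ 2 + v t ^ 2 := by
    rw [Complex.normSq_add_mul_I, add_comm]
  obtain ⟨L, hL0, hL, hzL⟩ := exists_exp_lift t₀ hz (by fun_prop) fun t h =>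
    hne t (by rw [← hz_normSq, h, map_zero])
  have hz0 : z t₀ = (v t₀ : ℝ) := by simp [z, hu0]
  have hv0 : v t₀ ≠ 0 := fun h => hne t₀ (by simp [hu0, h])
  have hpolar (t : ℝ) : z t = (v t₀ * Real.exp (L t).re : ℝ) *
      (Real.cos (L t).im + Real.sin (L t).im * Complex.I) := by
    rw [hzL t, hz0, Complex.exp_eq_exp_re_mul_sin_add_cos]
    push_cast
    ring
  have hscale (t : ℝ) : v t₀ * Real.exp (L t).re ≠ 0 := mul_ne_zero hv0 (Real.exp_ne_zero _)
  refine ⟨fun t => (L t).im, by simp [hL0], fun t => ?_, fun t => ?_, fun t => ?_⟩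
  · refine (Complex.imCLM.hasFDerivAt.comp_hasDerivAt t (hL t)).congr_deriv ?_
    simp only [imCLM_apply, div_im, hz_normSq, z, add_re, add_im, mul_re, mul_im, ofReal_re,
      ofReal_im, I_re, I_im]
    ring
  · have h : u t = v t₀ * Real.exp (L t).re * Real.sin (L t).im := by
      simpa [z, -Complex.ofReal_mul, -Complex.ofReal_sin, -Complex.ofReal_cos] using
        congrArg Complex.im (hpolar t)
    rw [h, mul_eq_zero_iff_left (hscale t)]
  · have h : v t = v t₀ * Real.exp (L t).re * Real.cos (L t).im := by
      simpa [z, -Complex.ofReal_mul, -Complex.ofReal_sin, -Complex.ofReal_cos] using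
        congrArg Complex.re (hpolar t)
    rw [h, mul_eq_zero_iff_left (hscale t)]

theorem tendsto_atTop_of_le_hasDerivAt {f f' : ℝ → ℝ} {a c : ℝ} (hc : 0 < c)
    (hf : ∀ t, a ≤ t → HasDerivAt f (f' t) t) (hf' : ∀ t, a ≤ t → c ≤ f' t) :
    Tendsto f atTop atTop := by
  have hle (t : ℝ) (ht : a ≤ t) : c * (t - a) ≤ f t - f a := by
    refine (convex_Ici a).mul_sub_le_image_sub_of_le_deriv
      (HasDerivAt.continuousOn fun s hs => hf s hs) (fun s hs => ?_) (fun s hs => ?_)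
      a Set.self_mem_Ici t ht ht
    · exact (hf s (interior_subset hs)).differentiableAt.differentiableWithinAt
    · rw [(hf s (interior_subset hs)).deriv]
      exact hf' s (interior_subset hs)
  refine tendsto_atTop_mono' atTop (f₁ := fun t => f a + c * (t - a)) ?_ ?_
  · filter_upwards [eventually_ge_atTop a] with t ht
    linarith [hle t ht]
  · exact tendsto_atTop_add_const_left _ _
      ((tendsto_atTop_add_const_right _ (-a) tendsto_id).const_mul_atTop hc)

/-- `y` is a solution, on the whole real line, of the linear oscillator equation
`y'' + q * y = 0`, and `y'` is its derivative; carrying `y'` along turns the equation into a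
first-order system. -/
structure IsOscillatorSolution {E : Type*} [NormedAddCommGroup E] [NormedSpace ℝ E]
    (q : ℝ → ℝ) (y y' : ℝ → E) : Prop where
  hasDerivAt (t : ℝ) : HasDerivAt y (y' t) t
  hasDerivAt_deriv (t : ℝ) : HasDerivAt y' (-q t • y t) t

namespace IsOscillatorSolution

section NormedSpace

variable {E F : Type*} [NormedAddCommGroup E] [NormedSpace ℝ E] [NormedAddCommGroup F]
  [NormedSpace ℝ F] {q : ℝ → ℝ} {y y' : ℝ → E} {t₀ : ℝ}

theorem continuous_deriv (hy : IsOscillatorSolution q y y') : Continuous y' :=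
  continuous_iff_continuousAt.mpr fun t => (hy.hasDerivAt_deriv t).continuousAt

theorem map (hy : IsOscillatorSolution q y y') (ℓ : E →L[ℝ] F) :
    IsOscillatorSolution q (fun t => ℓ (y t)) fun t => ℓ (y' t) where
  hasDerivAt t := ℓ.hasFDerivAt.comp_hasDerivAt t (hy.hasDerivAt t)
  hasDerivAt_deriv t :=
    (ℓ.hasFDerivAt.comp_hasDerivAt t (hy.hasDerivAt_deriv t)).congr_deriv (map_smul ℓ _ _)

theorem eq_zero (hy : IsOscillatorSolution q y y') (hq : Continuous q) (h0 : y t₀ = 0)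
    (h0' : y' t₀ = 0) (t : ℝ) : y t = 0 := by
  obtain ⟨a, b, ht, ht₀⟩ : ∃ a b, t ∈ Set.Ioo a b ∧ t₀ ∈ Set.Ioo a b :=
    ⟨min t t₀ - 1, max t t₀ + 1, by grind, by grind⟩
  obtain ⟨C, hC⟩ := isCompact_Icc.exists_bound_of_continuousOn (s := Set.Icc a b) hq.continuousOn
  have hlip : ∀ s ∈ Set.Ioo a b, LipschitzOnWith (max 1 C.toNNReal)
      (fun p : E × E => (p.2, -q s • p.1)) Set.univ := fun s hs => by
    have hqs : ‖-q s‖₊ ≤ C.toNNReal := by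
      rw [nnnorm_neg]
      exact NNReal.le_toNNReal_of_coe_le (hC s (Set.Ioo_subset_Icc_self hs))
    exact (LipschitzWith.prod_snd.prodMk
      (((lipschitzWith_smul (-q s)).comp LipschitzWith.prod_fst).weaken
        ((mul_one _).trans_le hqs))).lipschitzOnWith
  have h := ODE_solution_unique_of_mem_Ioo hlip ht₀
    (f := fun s => (y s, y' s)) (g := fun _ => 0)
    (fun s _ => ⟨(hy.hasDerivAt s).prodMk (hy.hasDerivAt_deriv s), Set.mem_univ _⟩)
    (fun s _ => ⟨(hasDerivAt_const s 0).congr_deriv (by ext <;> simp), Set.mem_univ _⟩)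
    (by simp [h0, h0'])
  exact congrArg Prod.fst (h ht)

theorem ofReal_re_eq {y y' : ℝ → ℂ} (hy : IsOscillatorSolution q y y') (hq : Continuous q)
    (h0 : (y t₀).im = 0) (h0' : (y' t₀).im = 0) (t : ℝ) : ((y t).re : ℂ) = y t :=
  Complex.ext rfl ((hy.map Complex.imCLM).eq_zero hq h0 h0' t).symm

end NormedSpace

variable {q q' y y' u u' v v' : ℝ → ℝ} {a t₀ : ℝ}

theorem wronskian_eq (hu : IsOscillatorSolution q u u') (hv : IsOscillatorSolution q v v')
    (s t : ℝ) : v s * u' s - u s * v' s = v t * u' t - u t * v' t := by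
  have h (s : ℝ) : HasDerivAt (fun s => v s * u' s - u s * v' s) 0 s := by
    refine (((hv.hasDerivAt s).mul (hu.hasDerivAt_deriv s)).sub
      ((hu.hasDerivAt s).mul (hv.hasDerivAt_deriv s))).congr_deriv ?_
    simp only [smul_eq_mul]
    ring
  exact is_const_of_deriv_eq_zero (fun s => (h s).differentiableAt) (fun s => (h s).deriv) s t

theorem hasDerivAt_energy (hy : IsOscillatorSolution q y y') {t : ℝ}
    (hq : HasDerivAt q (q' t) t) (hqt : q t ≠ 0) :
    HasDerivAt (fun s => y s ^ 2 + y' s ^ 2 / q s) (-(q' t * (y' t / q t) ^ 2)) t := by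
  refine (((hy.hasDerivAt t).pow 2).add
    (((hy.hasDerivAt_deriv t).pow 2).div hq hqt)).congr_deriv ?_
  simp only [smul_eq_mul, Pi.pow_apply]
  field_simp
  ring

theorem sq_le_energy (hy : IsOscillatorSolution q y y')
    (hq : ∀ t, a ≤ t → HasDerivAt q (q' t) t) (hq_pos : ∀ t, a ≤ t → 0 < q t)
    (hq'_nonneg : ∀ t, a ≤ t → 0 ≤ q' t) {t : ℝ} (ht : a ≤ t) :
    y t ^ 2 ≤ y a ^ 2 + y' a ^ 2 / q a := by
  have henergy (s : ℝ) (hs : a ≤ s) := hy.hasDerivAt_energy (hq s hs) (hq_pos s hs).ne'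
  have hanti : AntitoneOn (fun s => y s ^ 2 + y' s ^ 2 / q s) (Set.Ici a) :=
    antitoneOn_of_hasDerivWithinAt_nonpos (convex_Ici a) (HasDerivAt.continuousOn henergy)
      (fun s hs => (henergy s (interior_subset hs)).hasDerivWithinAt)
      fun s hs => neg_nonpos.mpr
        (mul_nonneg (hq'_nonneg s (interior_subset hs)) (sq_nonneg _))
  calc y t ^ 2 ≤ y t ^ 2 + y' t ^ 2 / q t :=
        le_add_of_nonneg_right (div_nonneg (sq_nonneg _) (hq_pos t ht).le)
    _ ≤ y a ^ 2 + y' a ^ 2 / q a := hanti Set.self_mem_Ici ht ht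

theorem exists_interlacing_zeros (hu : IsOscillatorSolution q u u')
    (hv : IsOscillatorSolution q v v') (hq : ∀ t, a ≤ t → HasDerivAt q (q' t) t)
    (hq_pos : ∀ t, a ≤ t → 0 < q t) (hq'_nonneg : ∀ t, a ≤ t → 0 ≤ q' t)
    (hu0 : u t₀ = 0) (hW : 0 < v t₀ * u' t₀) :
    ∃ α β : ℕ → ℝ, StrictMono α ∧ StrictMono β ∧
      Set.range α = {r | t₀ < r ∧ u r = 0} ∧ Set.range β = {r | t₀ < r ∧ v r = 0} ∧
      ∀ k : ℕ, β k < α k ∧ α k < β (k + 1) := by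
  have hwronskian (t : ℝ) : v t * u' t - u t * v' t = v t₀ * u' t₀ := by
    rw [wronskian_eq hu hv t t₀, hu0, zero_mul, sub_zero]
  have hradius (t : ℝ) : 0 < u t ^ 2 + v t ^ 2 := by
    refine (add_nonneg (sq_nonneg _) (sq_nonneg _)).lt_of_ne' fun h => ?_
    obtain ⟨hu_zero, hv_zero⟩ : u t = 0 ∧ v t = 0 := by
      rwa [add_eq_zero_iff_of_nonneg (sq_nonneg (u t)) (sq_nonneg (v t)), sq_eq_zero_iff,
        sq_eq_zero_iff] at h
    exact hW.ne (by rw [← hwronskian t, hu_zero, hv_zero, zero_mul, zero_mul, sub_zero])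
  obtain ⟨θ, hθ0, hθ, hsin, hcos⟩ := exists_pruferAngle hu.hasDerivAt hv.hasDerivAt
    hu.continuous_deriv hv.continuous_deriv (fun t => (hradius t).ne') hu0
  simp only [hwronskian] at hθ
  set M := u a ^ 2 + u' a ^ 2 / q a + (v a ^ 2 + v' a ^ 2 / q a)
  have hbound (t : ℝ) (ht : a ≤ t) : u t ^ 2 + v t ^ 2 ≤ M :=
    add_le_add (hu.sq_le_energy hq hq_pos hq'_nonneg ht) (hv.sq_le_energy hq hq_pos hq'_nonneg ht)
  have hM : 0 < M := (hradius a).trans_le (hbound a le_rfl)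
  have hmono : StrictMono θ := strictMono_of_hasDerivAt_pos hθ fun t => div_pos hW (hradius t)
  have hcont : Continuous θ := continuous_iff_continuousAt.mpr fun t => (hθ t).continuousAt
  have htop : Tendsto θ atTop atTop :=
    tendsto_atTop_of_le_hasDerivAt (div_pos hW hM) (fun t _ => hθ t) fun t ht =>
      div_le_div_of_nonneg_left hW.le (hradius t) (hbound t ht)
  simp only [hsin, hcos]
  exact exists_interlacing_zeros_sin_cos hmono hcont hθ0 htop

end IsOscillatorSolution

namespace IsAiry

variable {f g w : ℂ → ℂ} {f0 f0' g0 g0' w0 w0' : ℝ} {ω : ℂ}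

theorem const_mul_add (hf : IsAiry f f0 f0') (hg : IsAiry g g0 g0') (a : ℝ) :
    IsAiry (fun z => a * f z + g z) (a * f0 + g0) (a * f0' + g0') := by
  obtain ⟨hf_diff, hf_diff', hf_ode, hf_zero, hf_zero'⟩ := hf
  obtain ⟨hg_diff, hg_diff', hg_ode, hg_zero, hg_zero'⟩ := hg
  have hderiv : deriv (fun z => a * f z + g z) = fun z => a * deriv f z + deriv g z :=
    funext fun z => (((hf_diff z).hasDerivAt.const_mul _).add (hg_diff z).hasDerivAt).deriv
  have hderiv' (z : ℂ) : deriv (fun z => a * deriv f z + deriv g z) z = z * (a * f z + g z) := by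
    refine (((hf_diff' z).hasDerivAt.const_mul (a : ℂ)).add (hg_diff' z).hasDerivAt).deriv.trans ?_
    rw [hf_ode, hg_ode]
    ring
  refine ⟨(hf_diff.const_mul _).add hg_diff, ?_, fun z => ?_, ?_, ?_⟩
  · rw [hderiv]
    exact (hf_diff'.const_mul _).add hg_diff'
  · rw [hderiv, hderiv']
  · simp [hf_zero, hg_zero]
  · simp [hderiv, hf_zero', hg_zero']

theorem isOscillatorSolution_ray (hw : IsAiry w w0 w0') (hω : ω ^ 3 = -1) (κ : ℂ) :
    IsOscillatorSolution id (fun t : ℝ => κ * w (t * ω))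
      fun t : ℝ => κ * (deriv w (t * ω) * ω) := by
  obtain ⟨hdiff, hdiff', hode, -, -⟩ := hw
  have hline (t : ℝ) : HasDerivAt (fun s : ℝ => (s : ℂ) * ω) ω t := by
    simpa using (Complex.ofRealCLM.hasDerivAt (x := t)).mul_const ω
  refine ⟨fun t => ((hdiff _).hasDerivAt.comp t (hline t)).const_mul κ, fun t => ?_⟩
  refine ((((hdiff' _).hasDerivAt.comp t (hline t)).mul_const ω).const_mul κ).congr_deriv ?_
  rw [hode, Complex.real_smul, id_eq]
  push_cast
  linear_combination κ * t * w (t * ω) * hω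

theorem exists_real_isOscillatorSolution_ray (hw : IsAiry w w0 w0') (hω : ω ^ 3 = -1) {κ : ℂ}
    {a b : ℝ} (ha : κ * w0 = a) (hb : κ * (w0' * ω) = b) :
    ∃ y y' : ℝ → ℝ, IsOscillatorSolution id y y' ∧ y 0 = a ∧ y' 0 = b ∧
      ∀ t : ℝ, (y t : ℂ) = κ * w (t * ω) := by
  have hy := hw.isOscillatorSolution_ray hω κ
  obtain ⟨-, -, -, hzero, hzero'⟩ := hw
  have h0 : κ * w ((0 : ℝ) * ω) = a := by rw [ofReal_zero, zero_mul, hzero, ha]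
  have h0' : κ * (deriv w ((0 : ℝ) * ω) * ω) = b := by rw [ofReal_zero, zero_mul, hzero', hb]
  refine ⟨_, _, hy.map Complex.reCLM, ?_, ?_,
    hy.ofReal_re_eq (t₀ := 0) continuous_id ?_ ?_⟩
  all_goals simp only [h0, h0', Complex.reCLM_apply, Complex.ofReal_re, Complex.ofReal_im]

end IsAiry

theorem zeros_on_ray_interlace_general {f g : ℂ → ℂ} {c d : ℝ} {ω : ℂ} (hω : ω ^ 3 = -1)
    (hf : IsAiry f 0 d) (hg : IsAiry g c 0) (hd : d ≠ 0) (hc : c ≠ 0) :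
    ∃ α β : ℕ → ℝ, StrictMono α ∧ StrictMono β ∧
      Set.range α = {r : ℝ | 0 < r ∧ f (r * ω) = 0} ∧
      Set.range β = {r : ℝ | 0 < r ∧ g (r * ω) = 0} ∧
      ∀ k : ℕ, β k < α k ∧ α k < β (k + 1) := by
  have hω0 : ω ≠ 0 := by rintro rfl; norm_num at hω
  have hd' : (d : ℂ) ≠ 0 := mod_cast hd
  have hc' : (c : ℂ) ≠ 0 := mod_cast hc
  obtain ⟨u, u', hu, hu0, hu0', huf⟩ := hf.exists_real_isOscillatorSolution_ray hω
    (κ := (d * ω)⁻¹) (a := 0) (b := 1) (by simp) (by field_simp; simp)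
  obtain ⟨v, v', hv, hv0, -, hvg⟩ := hg.exists_real_isOscillatorSolution_ray hω
    (κ := (c : ℂ)⁻¹) (a := 1) (b := 0) (by field_simp; simp) (by simp)
  have hu_iff (r : ℝ) : f (r * ω) = 0 ↔ u r = 0 := by
    rw [← Complex.ofReal_eq_zero, huf, mul_eq_zero_iff_left (inv_ne_zero (mul_ne_zero hd' hω0))]
  have hv_iff (r : ℝ) : g (r * ω) = 0 ↔ v r = 0 := by
    rw [← Complex.ofReal_eq_zero, hvg, mul_eq_zero_iff_left (inv_ne_zero hc')]
  simp only [hu_iff, hv_iff]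
  exact hu.exists_interlacing_zeros hv (a := 1) (fun t _ => hasDerivAt_id t)
    (fun t ht => one_pos.trans_le ht) (fun _ _ => zero_le_one) hu0 (by simp [hu0', hv0])

theorem exp_pi_div_three_mul_I_pow_three :
    Complex.exp ((π / 3 : ℝ) * Complex.I) ^ 3 = -1 := by
  rw [← Complex.exp_nat_mul, ← Complex.exp_pi_mul_I]
  congr 1
  push_cast
  ring

theorem sqrt_mul_rpow {a x y : ℝ} (ha : 0 < a) (h : 1 / 2 + x = y) : √a * a ^ x = a ^ y := by
  rw [Real.sqrt_eq_rpow, ← Real.rpow_add ha, h]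

section AiryCombinations

variable {Ai Bi : ℂ → ℂ}

theorem isAiry_Uminus (hAi : IsAiryAi Ai) (hBi : IsAiryBi Bi) :
    IsAiry (Uminus Ai Bi) 0 (2 * (3 : ℝ) ^ ((1 : ℝ) / 6) / Real.Gamma (1 / 3)) := by
  have hU : Uminus Ai Bi = fun z => ((-√3 : ℝ) : ℂ) * Ai z + Bi z := by
    ext z
    rw [Uminus, Complex.ofReal_neg]
  rw [hU]
  convert hAi.const_mul_add hBi (-√3) using 1
  · rw [← sqrt_mul_rpow three_pos (x := -2 / 3) (y := -1 / 6) (by norm_num)]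
    ring
  · rw [← sqrt_mul_rpow three_pos (x := -1 / 3) (y := 1 / 6) (by norm_num)]
    ring

theorem isAiry_Uplus (hAi : IsAiryAi Ai) (hBi : IsAiryBi Bi) :
    IsAiry (Uplus Ai Bi) (2 * (3 : ℝ) ^ (-(1 : ℝ) / 6) / Real.Gamma (2 / 3)) 0 := by
  rw [show Uplus Ai Bi = fun z => (√3 : ℂ) * Ai z + Bi z from rfl]
  convert hAi.const_mul_add hBi √3 using 1
  · rw [← sqrt_mul_rpow three_pos (x := -2 / 3) (y := -1 / 6) (by norm_num)]
    ring
  · rw [← sqrt_mul_rpow three_pos (x := -1 / 3) (y := 1 / 6) (by norm_num)]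
    ring

end AiryCombinations

/-- `U₋` and `U₊` have infinitely many zeros on the open ray `arg z = π/3`, and the
increasing enumerations `(α k)` and `(β k)` of their moduli interlace:
`β k < α k < β (k+1)` for all `k` (indexed from `0`, so `α 0 = α₁`, `β 0 = β₁`). -/
theorem zeros_on_ray_interlace (Ai Bi : ℂ → ℂ)
    (hAi : IsAiryAi Ai) (hBi : IsAiryBi Bi) :
    ∃ α β : ℕ → ℝ, StrictMono α ∧ StrictMono β ∧
      Set.range α = rayZeroModuli (Uminus Ai Bi) ∧
      Set.range β = rayZeroModuli (Uplus Ai Bi) ∧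
      ∀ k : ℕ, β k < α k ∧ α k < β (k + 1) :=
  zeros_on_ray_interlace_general exp_pi_div_three_mul_I_pow_three (isAiry_Uminus hAi hBi)
    (isAiry_Uplus hAi hBi) (by positivity) (by positivity)
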